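/- For all positive integers k₁ and k₂, one has p_{q_{k₁}} · p_{q_{k₂}} ≤ q_{k₁+k₂}. -/

import Mathlib

/-- `nthPrime m` is the `m`-th prime number in ascending order (1-indexed):
`nthPrime 1 = 2`, `nthPrime 2 = 3`, `nthPrime 3 = 5`, `nthPrime 4 = 7`, ... -/
noncomputable def nthPrime (m : ℕ) : ℕ := Nat.nth Nat.Prime (m - 1)

/-- The sequence `(q_k)_{k ≥ 1}` with `q 1 = 1` and `q k = 2 * p_{q (k-1)}` for `k > 1`
(the value `q 0 = 1` is junk). -/
noncomputable def q : ℕ → ℕ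
  | 0 => 1
  | 1 => 1
  | (k+2) => 2 * nthPrime (q (k+1))

/-!
Write `P_k = p_{q_k}`, `R_k = P_{k+1} / P_k` and `lg = log₂`; the claim is `P_a P_b ≤ 2 P_{a+b-1}`.
Since `R_k = 2 p_m / m` with `m = q_{k+1}`, the Chebyshev-type bounds `π(n) (lg n - 3) ≤ 2 n` and
`n ≤ (π(n) + 1) lg (n + 1)` give
`lg P_{k+1} - 3 ≤ R_k ≤ 2 lg P_{k+1} + 1/2`.
Subtracting `lg R_k = lg P_{k+1} - lg P_k`, this becomes
`lg P_k - 3 ≤ R_k - lg R_k ≤ lg P_k + lg P_{k+1} + 1/2`.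
As `x ↦ x - lg x` is increasing and `lg 12 ≥ 7/2`, it follows that `12 P_a P_{a+1} ≤ P_c` implies
`R_a ≤ R_c`. Hence the stronger inequality `12 P_a P_b ≤ P_{a+b-1}` passes from `(a, b)` to
`(a + 1, b)` whenever `a < b`, because the two sides are multiplied by `R_a` and `R_{a+b-1}`.
It holds for `a = 6`, and the rows `a ≤ 5` of the claim are checked directly; both use
the growth `R_k ≥ 4 (k - 2)` and upper bounds for `P_4`, `P_5`, `P_6`.
-/

open Real (logb)
open scoped Nat.Prime

theorem strictMonoOn_sub_logb {b : ℝ} (hb : 1 < b) :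
    StrictMonoOn (fun x ↦ x - logb b x) (Set.Ici (Real.log b)⁻¹) := by
  intro x hx y _ hxy
  have hb' : 0 < Real.log b := Real.log_pos hb
  have hx' : 1 ≤ x * Real.log b := (inv_le_iff_one_le_mul₀ hb').1 hx
  have hx0 : 0 < x := (inv_pos.2 hb').trans_le hx
  have hlog : Real.log (y / x) < y / x - 1 :=
    Real.log_lt_sub_one_of_pos (div_pos (hx0.trans hxy) hx0) ((one_lt_div hx0).2 hxy).ne'
  have hdiff : logb b y - logb b x < y - x := by
    rw [← Real.logb_div (hx0.trans hxy).ne' hx0.ne', Real.logb, div_lt_iff₀ hb']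
    calc Real.log (y / x) < (y - x) / x := by rwa [sub_div, div_self hx0.ne']
      _ ≤ (y - x) * Real.log b := by
        rw [div_le_iff₀ hx0]
        nlinarith
  change x - logb b x < y - logb b y
  linarith

theorem le_of_sub_logb_two_le {x y : ℝ} (hx : 2 ≤ x) (hy : 2 ≤ y)
    (h : x - logb 2 x ≤ y - logb 2 y) : x ≤ y := by
  have hinv : (Real.log 2)⁻¹ ≤ 2 := by
    rw [inv_le_iff_one_le_mul₀ (Real.log_pos one_lt_two)]
    linarith [Real.log_two_gt_d9]
  exact ((strictMonoOn_sub_logb one_lt_two).le_iff_le (hinv.trans hx) (hinv.trans hy)).1 h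

theorem logb_two_natCast_le {n k : ℕ} (h : n ≤ 2 ^ k) : logb 2 n ≤ k := by
  rcases n.eq_zero_or_pos with rfl | hn
  · simp
  · rw [Real.logb_le_iff_le_rpow one_lt_two (mod_cast hn), Real.rpow_natCast]
    exact_mod_cast h

theorem mul_logb_two_natCast_le {n j k : ℕ} (h : n ^ j ≤ 2 ^ k) : j * logb 2 n ≤ k := by
  rw [← Real.logb_pow, ← Nat.cast_pow]
  exact logb_two_natCast_le h

theorem pow_primeCounting_sub_le_choose {m n : ℕ} (hmn : m ≤ n) (hn : n ≤ 2 * m) :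
    (m + 1) ^ (π n - π m) ≤ n.choose m := by
  have hprod : ∏ p ∈ Finset.Ico (m + 1) (n + 1) with p.Prime, p ≤ n.choose m := by
    have h := primorial_add_le (show n - m ≤ m by omega)
    rw [primorial_add, Nat.add_sub_cancel' hmn] at h
    exact Nat.le_of_mul_le_mul_left h (primorial_pos m)
  have hcard : ((Finset.Ico (m + 1) (n + 1)).filter Nat.Prime).card = π n - π m := by
    have hsdiff : (Finset.Ico (m + 1) (n + 1)).filter Nat.Prime =
        Nat.primesLE n \ Nat.primesLE m := by
      ext p
      simp only [Finset.mem_filter, Finset.mem_Ico, Finset.mem_sdiff, Nat.mem_primesLE]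
      grind
    rw [hsdiff, Finset.card_sdiff_of_subset (Nat.primesLE_mono hmn),
      Nat.primesLE_card_eq_primeCounting, Nat.primesLE_card_eq_primeCounting]
  rw [← hcard]
  refine (Finset.pow_card_le_prod _ _ _ fun p hp ↦ ?_).trans hprod
  exact (Finset.mem_Ico.1 (Finset.mem_filter.1 hp).1).1

theorem choose_half_le_four_pow (n : ℕ) : n.choose (n / 2) ≤ 4 ^ (n / 2) := by
  rcases n.even_or_odd' with ⟨k, rfl | rfl⟩
  · rw [Nat.mul_div_cancel_left k two_pos, ← Nat.centralBinom_eq_two_mul_choose]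
    exact Nat.centralBinom_le_four_pow k
  · rw [show (2 * k + 1) / 2 = k by omega]
    exact Nat.choose_middle_le_pow k

theorem primeCounting_sub_mul_logb_le (n : ℕ) :
    ((π n : ℝ) - π (n - n / 2)) * logb 2 (n - n / 2 : ℕ) ≤ 2 * (n / 2 : ℕ) := by
  set h := n / 2
  set m := n - h
  rcases m.eq_zero_or_pos with hm | hm
  · simp [hm]
  have hpow : m ^ (π n - π m) ≤ 2 ^ (2 * h) :=
    calc m ^ (π n - π m) ≤ (m + 1) ^ (π n - π m) := Nat.pow_le_pow_left m.le_succ _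
      _ ≤ n.choose m := pow_primeCounting_sub_le_choose (by omega) (by omega)
      _ = n.choose h := Nat.choose_symm (by omega)
      _ ≤ 4 ^ h := choose_half_le_four_pow n
      _ = 2 ^ (2 * h) := by rw [pow_mul]; norm_num
  have hlog := mul_logb_two_natCast_le hpow
  rw [Nat.cast_sub (Nat.monotone_primeCounting (by omega)), Nat.cast_mul] at hlog
  exact hlog

theorem three_mul_primeCounting_le (n : ℕ) : 3 * π n ≤ n + 9 := by
  have hsix : π 6 = 3 := by decide
  rcases le_total n 6 with hn | hn
  · have := Nat.monotone_primeCounting hn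
    omega
  · have hstep := Nat.primeCounting_add_le (a := 6) (by norm_num) le_rfl (n - 6)
    rw [Nat.add_sub_cancel' hn, hsix, show Nat.totient 6 = 2 by decide] at hstep
    omega

theorem add_mul_sub_two_le_of_mul_sub_three_le {A B m h u : ℝ} (hu : 3 < u)
    (hA : A * (u - 3) ≤ 2 * m) (hB : B * u ≤ 2 * h) (hmh : m * u ≤ 2 * h * (u - 3)) :
    (A + B) * (u - 2) ≤ 2 * (m + h) := by
  have hB' : B ≤ 2 * h / u := (le_div_iff₀ (by linarith)).2 hB
  have hA' : A ≤ 2 * (2 * h / u) := by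
    have hm : m / (u - 3) ≤ 2 * h / u := by
      rwa [div_le_div_iff₀ (by linarith) (by linarith)]
    calc A ≤ 2 * m / (u - 3) := (le_div_iff₀ (by linarith)).2 hA
      _ ≤ 2 * (2 * h / u) := by rw [mul_div_assoc]; linarith
  calc (A + B) * (u - 2) = A * (u - 3) + A + B * (u - 2) := by ring
    _ ≤ 2 * m + 2 * (2 * h / u) + 2 * h / u * (u - 2) := by gcongr; linarith
    _ = 2 * (m + h) := by field_simp; ring

theorem primeCounting_mul_logb_sub_three_le_of_le {n : ℕ} (hn : n ≤ 256) :
    π n * (logb 2 n - 3) ≤ 2 * n := by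
  have hπ : 3 * (π n : ℝ) ≤ n + 9 := mod_cast three_mul_primeCounting_le n
  have hπ0 : (0 : ℝ) ≤ π n := Nat.cast_nonneg _
  have hn0 : (0 : ℝ) ≤ n := Nat.cast_nonneg _
  rcases le_or_gt n 8 with h8 | h8
  · have hlog : logb 2 n ≤ 3 := mod_cast logb_two_natCast_le (k := 3) h8
    nlinarith [hπ0, hn0]
  rcases le_or_gt n 64 with h64 | h64
  · have hlog : logb 2 n ≤ 6 := mod_cast logb_two_natCast_le (k := 6) h64
    have hn9 : (9 : ℝ) ≤ n := mod_cast h8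
    nlinarith [hπ0, hn0]
  · have hlog : logb 2 n ≤ 8 := mod_cast logb_two_natCast_le (k := 8) hn
    have hn65 : (65 : ℝ) ≤ n := mod_cast h64
    nlinarith [hπ0, hn0]

-- Strong induction on `n = m + h` with `h = n / 2`: the `π n - π m` primes in `(m, n]` divide
-- `n.choose m ≤ 4 ^ h`, and passing from `m` to `n` raises the logarithm by at most `1`.
theorem primeCounting_mul_logb_sub_three_le (n : ℕ) : π n * (logb 2 n - 3) ≤ 2 * n := by
  induction n using Nat.strong_induction_on with
  | _ n ih =>
    rcases le_or_gt n 256 with hn | hn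
    · exact primeCounting_mul_logb_sub_three_le_of_le hn
    have ihm := ih (n - n / 2) (by omega)
    have hdiff := primeCounting_sub_mul_logb_le n
    set h := n / 2
    set m := n - h
    set u := logb 2 m
    have hm : (m : ℝ) ≤ h + 1 := mod_cast (by omega : m ≤ h + 1)
    have hh : (128 : ℝ) ≤ h := mod_cast (by omega : 128 ≤ h)
    have hm0 : (128 : ℝ) ≤ m := mod_cast (by omega : 128 ≤ m)
    have hu : 7 ≤ u := by
      rw [Real.le_logb_iff_rpow_le one_lt_two (by linarith)]
      exact (by norm_num : (2 : ℝ) ^ (7 : ℝ) = 128).trans_le hm0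
    have hmh : m * u ≤ 2 * h * (u - 3) := by nlinarith
    have hlog : logb 2 n ≤ u + 1 := by
      calc logb 2 n ≤ logb 2 (m * 2) :=
            Real.logb_le_logb_of_le one_lt_two (mod_cast (by omega : 0 < n))
              (mod_cast (by omega : n ≤ m * 2))
        _ = u + 1 := by
          rw [Real.logb_mul (by linarith) two_ne_zero, Real.logb_self_eq_one one_lt_two]
    calc π n * (logb 2 n - 3) ≤ π n * (u - 2) :=
          mul_le_mul_of_nonneg_left (by linarith) (Nat.cast_nonneg _)
      _ = (π m + (π n - π m)) * (u - 2) := by ring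
      _ ≤ 2 * (m + h) := add_mul_sub_two_le_of_mul_sub_three_le (by linarith) ihm hdiff hmh
      _ = 2 * n := by rw [← Nat.cast_add, show m + h = n by omega]

theorem le_primeCounting_add_one_mul_logb (n : ℕ) : n ≤ (π n + 1) * logb 2 (n + 1) := by
  have hψ := (Chebyshev.psi_ge n).trans (Chebyshev.psi_le_primeCounting_mul_log n)
  have hlog : π n * Real.log n ≤ π n * Real.log (n + 1) := by
    rcases n.eq_zero_or_pos with rfl | hn
    · simp
    · gcongr
      linarith
  rw [Real.logb, ← mul_div_assoc, le_div_iff₀ (Real.log_pos one_lt_two)]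
  linarith

section nthPrime

variable {m n : ℕ}

theorem prime_nthPrime (m : ℕ) : (nthPrime m).Prime := Nat.prime_nth_prime _

theorem nthPrime_primeCounting (hn : n.Prime) : nthPrime (π n) = n := by
  rw [nthPrime, Nat.primeCounting, Nat.primeCounting', Nat.count_succ, if_pos hn,
    Nat.add_sub_cancel, Nat.nth_count hn]

theorem primeCounting_nthPrime_sub_one (m : ℕ) : π (nthPrime m - 1) = m - 1 := by
  rw [Nat.primeCounting_sub_one, nthPrime, Nat.primeCounting'_nth_eq]

theorem primeCounting_nthPrime (hm : 1 ≤ m) : π (nthPrime m) = m := by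
  rw [nthPrime, Nat.primeCounting, Nat.primeCounting',
    Nat.count_nth_succ_of_infinite Nat.infinite_setOfPred_prime, Nat.sub_add_cancel hm]

theorem lt_nthPrime (m : ℕ) : m < nthPrime m := by
  have := Nat.add_two_le_nth_prime (m - 1)
  rw [nthPrime]
  omega

theorem mul_logb_nthPrime_sub_three_le (hm : 1 ≤ m) :
    m * (logb 2 (nthPrime m) - 3) ≤ 2 * nthPrime m := by
  simpa only [primeCounting_nthPrime hm] using primeCounting_mul_logb_sub_three_le (nthPrime m)

theorem nthPrime_le_mul_logb_add_one (hm : 1 ≤ m) :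
    nthPrime m ≤ m * logb 2 (nthPrime m) + 1 := by
  have h := le_primeCounting_add_one_mul_logb (nthPrime m - 1)
  rw [primeCounting_nthPrime_sub_one] at h
  push_cast [Nat.cast_sub hm, Nat.cast_sub (prime_nthPrime m).one_le, sub_add_cancel] at h
  linarith

theorem nthPrime_le_of_le_primeCounting (hm : 1 ≤ m) (h : m ≤ π n) : nthPrime m ≤ n :=
  Nat.lt_succ_iff.1 (Nat.nth_lt_of_lt_count (show m - 1 < π n by omega))

theorem nthPrime_le_of_mul_logb_le (hm : 1 ≤ m) (hn : 1 ≤ n)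
    (h : (m + 1) * logb 2 (n + 1) ≤ n) : nthPrime m ≤ n := by
  have hn' : (1 : ℝ) ≤ n := mod_cast hn
  have hlog : 0 < logb 2 (n + 1) := Real.logb_pos one_lt_two (by linarith)
  have hle : (m : ℝ) + 1 ≤ π n + 1 :=
    le_of_mul_le_mul_right (h.trans (le_primeCounting_add_one_mul_logb n)) hlog
  exact nthPrime_le_of_le_primeCounting hm (mod_cast (add_le_add_iff_right (1 : ℝ)).1 hle)

end nthPrime

theorem one_le_q : ∀ k, 1 ≤ q k
  | 0 => le_rfl
  | 1 => le_rfl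
  | k + 2 => by
    have := (prime_nthPrime (q (k + 1))).one_le
    rw [q]
    omega

theorem q_succ {k : ℕ} (hk : 1 ≤ k) : q (k + 1) = 2 * nthPrime (q k) := by
  obtain ⟨k, rfl⟩ := Nat.exists_eq_succ_of_ne_zero (by omega : k ≠ 0)
  rw [q]

/-- The prime `P_k = p_{q_k}`, as a real number, so that `q_{k+1} = 2 P_k`. -/
noncomputable def primeQ (k : ℕ) : ℝ := nthPrime (q k)

/-- The quotient `R_k = P_{k+1} / P_k` of consecutive terms of `primeQ`, which measures the growth
of the sequence. -/
noncomputable def ratio (k : ℕ) : ℝ := primeQ (k + 1) / primeQ k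

section values

variable {k p : ℕ}

theorem q_succ_eq (hk : 1 ≤ k) (hp : p.Prime) (h : π p = q k) : q (k + 1) = 2 * p := by
  rw [q_succ hk, ← h, nthPrime_primeCounting hp]

theorem primeQ_eq (hp : p.Prime) (h : π p = q k) : primeQ k = p := by
  rw [primeQ, ← h, nthPrime_primeCounting hp]

theorem primeCounting_two_eq_q : π 2 = q 1 := by
  rw [q]
  decide

theorem primeCounting_seven_eq_q : π 7 = q 2 := by
  rw [q_succ_eq le_rfl Nat.prime_two primeCounting_two_eq_q]
  decide

theorem primeCounting_fortyThree_eq_q : π 43 = q 3 := by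
  rw [q_succ_eq (by norm_num) (by norm_num) primeCounting_seven_eq_q]
  decide

theorem primeCounting_fourHundredFortyThree_eq_q : π 443 = q 4 := by
  rw [q_succ_eq (by norm_num) (by norm_num) primeCounting_fortyThree_eq_q]
  decide +kernel

theorem primeQ_one : primeQ 1 = 2 := primeQ_eq Nat.prime_two primeCounting_two_eq_q

theorem primeQ_two : primeQ 2 = 7 := primeQ_eq (by norm_num) primeCounting_seven_eq_q

theorem primeQ_three : primeQ 3 = 43 := primeQ_eq (by norm_num) primeCounting_fortyThree_eq_q

theorem primeQ_four : primeQ 4 = 443 :=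
  primeQ_eq (by norm_num) primeCounting_fourHundredFortyThree_eq_q

theorem q_succ_cast (hk : 1 ≤ k) : (q (k + 1) : ℝ) = 2 * primeQ k := by
  rw [q_succ hk, primeQ]
  push_cast
  rfl

theorem primeQ_le_of_mul_logb_le {n : ℕ} (hn : 1 ≤ n) (h : (q k + 1) * logb 2 (n + 1) ≤ n) :
    primeQ k ≤ n :=
  Nat.cast_le.2 (nthPrime_le_of_mul_logb_le (one_le_q k) hn h)

theorem primeQ_five_le : primeQ 5 ≤ 12288 := by
  have hq : (q 5 : ℝ) = 886 := by
    rw [q_succ_cast (by norm_num), primeQ_four]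
    norm_num
  have hlog : 5 * logb 2 12289 ≤ 68 :=
    mod_cast mul_logb_two_natCast_le (show 12289 ^ 5 ≤ 2 ^ 68 by norm_num)
  refine mod_cast primeQ_le_of_mul_logb_le (k := 5) (n := 12288) (by norm_num) ?_
  norm_num [hq]
  linarith

theorem primeQ_six_le : primeQ 6 ≤ 2 ^ 19 := by
  have hq : (q 6 : ℝ) ≤ 24576 := by
    rw [q_succ_cast (by norm_num)]
    linarith [primeQ_five_le]
  have hlog : logb 2 ((2 ^ 19 : ℕ) + 1) ≤ 20 :=
    mod_cast logb_two_natCast_le (show 2 ^ 19 + 1 ≤ 2 ^ 20 by norm_num)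
  refine mod_cast primeQ_le_of_mul_logb_le (k := 6) (n := 2 ^ 19) (by norm_num) ?_
  calc ((q 6 : ℝ) + 1) * logb 2 ((2 ^ 19 : ℕ) + 1) ≤ (24576 + 1) * 20 :=
        mul_le_mul (by linarith) hlog (Real.logb_nonneg one_lt_two (by norm_num)) (by norm_num)
    _ ≤ (2 ^ 19 : ℕ) := by norm_num

end values

section ratio

variable {k : ℕ}

theorem primeQ_pos (k : ℕ) : 0 < primeQ k := Nat.cast_pos.2 (prime_nthPrime _).pos

theorem ratio_pos (k : ℕ) : 0 < ratio k := div_pos (primeQ_pos _) (primeQ_pos _)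

theorem ratio_mul_primeQ (k : ℕ) : ratio k * primeQ k = primeQ (k + 1) :=
  div_mul_cancel₀ _ (primeQ_pos k).ne'

theorem two_le_primeQ (k : ℕ) : 2 ≤ primeQ k :=
  Nat.ofNat_le_cast.2 (prime_nthPrime (q k)).two_le

theorem two_le_ratio (hk : 1 ≤ k) : 2 ≤ ratio k := by
  rw [ratio, le_div_iff₀ (primeQ_pos k), ← q_succ_cast hk]
  exact Nat.cast_le.2 (lt_nthPrime _).le

theorem logb_ratio (k : ℕ) : logb 2 (ratio k) = logb 2 (primeQ (k + 1)) - logb 2 (primeQ k) :=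
  Real.logb_div (primeQ_pos _).ne' (primeQ_pos _).ne'

theorem logb_primeQ_sub_three_le (hk : 1 ≤ k) :
    logb 2 (primeQ k) - 3 ≤ ratio k - logb 2 (ratio k) := by
  have h : 2 * primeQ k * (logb 2 (primeQ (k + 1)) - 3) ≤ 2 * primeQ (k + 1) := by
    rw [← q_succ_cast hk]
    exact mul_logb_nthPrime_sub_three_le (one_le_q _)
  have hratio : logb 2 (primeQ (k + 1)) - 3 ≤ ratio k := by
    rw [ratio, le_div_iff₀ (primeQ_pos k)]
    linarith
  rw [logb_ratio]
  linarith

theorem ratio_sub_logb_ratio_le (hk : 1 ≤ k) :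
    ratio k - logb 2 (ratio k) ≤ logb 2 (primeQ k) + logb 2 (primeQ (k + 1)) + 1 / 2 := by
  have h : primeQ (k + 1) ≤ 2 * primeQ k * logb 2 (primeQ (k + 1)) + 1 := by
    rw [← q_succ_cast hk]
    exact nthPrime_le_mul_logb_add_one (one_le_q _)
  have hratio : ratio k ≤ 2 * logb 2 (primeQ (k + 1)) + 1 / 2 := by
    rw [ratio, div_le_iff₀ (primeQ_pos k)]
    linarith [two_le_primeQ k]
  rw [logb_ratio]
  linarith

theorem le_ratio_of_rpow_le {r : ℝ} (hk : 1 ≤ k) (hr : 2 ≤ r) (h : 8 * 2 ^ r ≤ r * primeQ k) :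
    r ≤ ratio k := by
  have hlog : 3 + r ≤ logb 2 r + logb 2 (primeQ k) :=
    calc 3 + r = logb 2 (2 ^ (3 + r)) := (Real.logb_rpow two_pos (by norm_num)).symm
      _ ≤ logb 2 (r * primeQ k) :=
          Real.logb_le_logb_of_le one_lt_two (by positivity)
            (by rwa [Real.rpow_add two_pos, show (2 : ℝ) ^ (3 : ℝ) = 8 by norm_num])
      _ = logb 2 r + logb 2 (primeQ k) := Real.logb_mul (by linarith) (primeQ_pos k).ne'
  apply le_of_sub_logb_two_le hr (two_le_ratio hk)
  linarith [logb_primeQ_sub_three_le hk]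

theorem four_mul_le_ratio_add_two {n : ℕ} (hn : 1 ≤ n) (h : 2 * 16 ^ n ≤ n * primeQ (n + 2)) :
    4 * n ≤ ratio (n + 2) := by
  have hn' : (1 : ℝ) ≤ n := mod_cast hn
  have hpow : (2 : ℝ) ^ (4 * n : ℝ) = 16 ^ n := by
    rw [Real.rpow_mul two_pos.le, Real.rpow_natCast]
    norm_num
  apply le_ratio_of_rpow_le (by omega) (by linarith)
  rw [hpow]
  linarith

theorem two_mul_sixteen_pow_le_mul_primeQ {n : ℕ} (hn : 1 ≤ n) :
    2 * 16 ^ n ≤ n * primeQ (n + 2) := by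
  have htwo : 2 * 16 ^ 2 ≤ (2 : ℕ) * primeQ (2 + 2) := by norm_num [primeQ_four]
  rcases (by omega : n = 1 ∨ n = 2 ∨ 3 ≤ n) with rfl | rfl | hn3
  · norm_num [primeQ_three]
  · exact htwo
  induction n, hn3 using Nat.le_induction with
  | base =>
    have hratio := four_mul_le_ratio_add_two one_le_two htwo
    have hP := ratio_mul_primeQ 4
    rw [primeQ_four] at hP
    norm_num at hratio hP ⊢
    linarith
  | succ n hn3 ih =>
    have hP := ih (by omega)
    have hn' : (3 : ℝ) ≤ n := mod_cast hn3
    have hratio := four_mul_le_ratio_add_two (by omega) hP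
    have hpos := (primeQ_pos (n + 2)).le
    calc (2 * 16 ^ (n + 1) : ℝ) = 16 * (2 * 16 ^ n) := by ring
      _ ≤ 16 * (n * primeQ (n + 2)) := by gcongr
      _ ≤ 4 * (n + 1) * (n * primeQ (n + 2)) := by
        gcongr
        linarith
      _ = (n + 1) * (4 * n * primeQ (n + 2)) := by ring
      _ ≤ (n + 1) * (ratio (n + 2) * primeQ (n + 2)) := by gcongr
      _ = (n + 1 : ℕ) * primeQ (n + 1 + 2) := by rw [ratio_mul_primeQ]; push_cast; ring_nf

theorem four_mul_le_ratio {n : ℕ} (h : n + 2 ≤ k) : 4 * n ≤ ratio k := by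
  obtain ⟨l, rfl⟩ := Nat.exists_eq_add_of_le' (show 2 ≤ k by omega)
  rcases l.eq_zero_or_pos with rfl | hl
  · obtain rfl : n = 0 := by omega
    simpa using (ratio_pos 2).le
  · have hn : (n : ℝ) ≤ l := mod_cast (by omega : n ≤ l)
    linarith [four_mul_le_ratio_add_two hl (two_mul_sixteen_pow_le_mul_primeQ hl)]

theorem ascFactorial_mul_primeQ_le {n : ℕ} (h : n + 2 ≤ k) (j : ℕ) :
    4 ^ j * n.ascFactorial j * primeQ k ≤ primeQ (k + j) := by
  induction j with
  | zero => simp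
  | succ j ih =>
    have hratio := four_mul_le_ratio (show n + j + 2 ≤ k + j by omega)
    have hpos := (primeQ_pos k).le
    calc (4 ^ (j + 1) * n.ascFactorial (j + 1) * primeQ k : ℝ)
        = 4 * (n + j : ℕ) * (4 ^ j * n.ascFactorial j * primeQ k) := by
          rw [Nat.ascFactorial_succ]
          push_cast
          ring
      _ ≤ ratio (k + j) * primeQ (k + j) := mul_le_mul hratio ih (by positivity) (ratio_pos _).le
      _ = primeQ (k + (j + 1)) := ratio_mul_primeQ (k + j)

theorem monotone_primeQ : Monotone primeQ := by
  refine monotone_nat_of_le_succ fun k ↦ ?_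
  rcases k.eq_zero_or_pos with rfl | hk
  · exact le_rfl
  · rw [← ratio_mul_primeQ]
    nlinarith [two_le_ratio hk, primeQ_pos k]

theorem ratio_le_ratio_of_twelve_mul_le {a c : ℕ} (ha : 1 ≤ a) (hc : 1 ≤ c)
    (h : 12 * primeQ a * primeQ (a + 1) ≤ primeQ c) : ratio a ≤ ratio c := by
  have hP := primeQ_pos a
  have hP' := primeQ_pos (a + 1)
  have htwelve : 7 ≤ 2 * logb 2 12 :=
    calc (7 : ℝ) = logb 2 (2 ^ 7) := by
          rw [Real.logb_pow, Real.logb_self_eq_one one_lt_two]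
          norm_num
      _ ≤ logb 2 (12 ^ 2) := Real.logb_le_logb_of_le one_lt_two (by norm_num) (by norm_num)
      _ = 2 * logb 2 12 := by rw [Real.logb_pow, Nat.cast_ofNat]
  have hlog : logb 2 12 + logb 2 (primeQ a) + logb 2 (primeQ (a + 1)) ≤ logb 2 (primeQ c) := by
    rw [← Real.logb_mul (by norm_num) hP.ne', ← Real.logb_mul (by positivity) hP'.ne']
    exact Real.logb_le_logb_of_le one_lt_two (by positivity) h
  apply le_of_sub_logb_two_le (two_le_ratio ha) (two_le_ratio hc)
  linarith [ratio_sub_logb_ratio_le ha, logb_primeQ_sub_three_le hc]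

end ratio

theorem twelve_mul_primeQ_mul_primeQ_le {a b : ℕ} (ha : 5 ≤ a) (hab : a < b) :
    12 * primeQ (a + 1) * primeQ b ≤ primeQ (a + b) := by
  induction a, ha using Nat.le_induction with
  | base =>
    have hb := primeQ_pos b
    calc 12 * primeQ (5 + 1) * primeQ b ≤ 12 * 2 ^ 19 * primeQ b := by
          gcongr
          exact primeQ_six_le
      _ ≤ 4 ^ 5 * Nat.ascFactorial 4 5 * primeQ b := by
        refine mul_le_mul_of_nonneg_right ?_ hb.le
        norm_num [Nat.ascFactorial]
      _ ≤ primeQ (b + 5) := ascFactorial_mul_primeQ_le (by omega) 5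
      _ = primeQ (5 + b) := by rw [add_comm]
  | succ a ha ih =>
    have ih := ih (by omega)
    have hratio : ratio (a + 1) ≤ ratio (a + b) := by
      refine ratio_le_ratio_of_twelve_mul_le (by omega) (by omega) (le_trans ?_ ih)
      have := primeQ_pos (a + 1)
      gcongr
      exact monotone_primeQ (by omega)
    calc 12 * primeQ (a + 1 + 1) * primeQ b
        = ratio (a + 1) * (12 * primeQ (a + 1) * primeQ b) := by
          rw [← ratio_mul_primeQ (a + 1)]
          ring
      _ ≤ ratio (a + b) * primeQ (a + b) := by
          have hb := primeQ_pos b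
          have ha' := primeQ_pos (a + 1)
          exact mul_le_mul hratio ih (by positivity) (ratio_pos _).le
      _ = primeQ (a + 1 + b) := by rw [ratio_mul_primeQ, add_right_comm]

theorem primeQ_mul_primeQ_le_of_le_ascFactorial {n a b : ℕ} (hb : n + 2 ≤ b)
    (h : primeQ (a + 1) ≤ 2 * 4 ^ a * n.ascFactorial a) :
    primeQ (a + 1) * primeQ b ≤ 2 * primeQ (a + b) := by
  have := (primeQ_pos b).le
  calc primeQ (a + 1) * primeQ b ≤ 2 * 4 ^ a * n.ascFactorial a * primeQ b := by gcongr
    _ = 2 * (4 ^ a * n.ascFactorial a * primeQ b) := by ring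
    _ ≤ 2 * primeQ (a + b) := by
      rw [add_comm a]
      gcongr
      exact ascFactorial_mul_primeQ_le hb a

theorem primeQ_mul_primeQ_le {a b : ℕ} (hab : a < b) :
    primeQ (a + 1) * primeQ b ≤ 2 * primeQ (a + b) := by
  rcases lt_or_ge a 5 with ha | ha
  · interval_cases a
    · rw [zero_add, zero_add, primeQ_one]
    · rcases (by omega : b = 2 ∨ 1 + 2 ≤ b) with rfl | hb
      · norm_num [primeQ_two, primeQ_three]
      · exact primeQ_mul_primeQ_le_of_le_ascFactorial hb
          (by norm_num [primeQ_two, Nat.ascFactorial])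
    · exact primeQ_mul_primeQ_le_of_le_ascFactorial (n := 1) hab
        (by norm_num [primeQ_three, Nat.ascFactorial])
    · exact primeQ_mul_primeQ_le_of_le_ascFactorial (n := 2) hab
        (by norm_num [primeQ_four, Nat.ascFactorial])
    · exact primeQ_mul_primeQ_le_of_le_ascFactorial (n := 3) hab
        (primeQ_five_le.trans (by norm_num [Nat.ascFactorial]))
  · have hpos : 0 < primeQ (a + 1) * primeQ b := mul_pos (primeQ_pos _) (primeQ_pos _)
    linarith [twelve_mul_primeQ_mul_primeQ_le ha hab, primeQ_pos (a + b)]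

/-- For all positive integers `k₁` and `k₂`, one has `p_{q_{k₁}} · p_{q_{k₂}} ≤ q_{k₁+k₂}`. -/
theorem nthPrime_q_mul_nthPrime_q_le (k₁ k₂ : ℕ) (hk₁ : 1 ≤ k₁) (hk₂ : 1 ≤ k₂) :
    nthPrime (q k₁) * nthPrime (q k₂) ≤ q (k₁ + k₂) := by
  wlog hle : k₁ ≤ k₂ generalizing k₁ k₂
  · rw [mul_comm, add_comm]
    exact this k₂ k₁ hk₂ hk₁ (by omega)
  obtain ⟨a, rfl⟩ := Nat.exists_eq_add_of_le' hk₁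
  have hP := primeQ_mul_primeQ_le (Nat.lt_of_succ_le hle)
  rw [add_right_comm, ← Nat.cast_le (α := ℝ), Nat.cast_mul, q_succ_cast (by omega)]
  exact hP
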